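/- Let 1 ≤ c ≤ 4/3. Every incentive compatible and individually rational direct mechanism on the triangle T = {(v1,v2) : v1 ≥ 0, v2 ≥ 0, v1/c + v2 ≤ 1} with the uniform distribution μ on T has revenue at most (2/3)*sqrt(c/3). -/

import Mathlib

open MeasureTheory Real

noncomputable section

/-- Utility of a buyer with value `v = (v₁, v₂)` for a menu item
`it = ((x₁, x₂), p)`, namely `v₁ * x₁ + v₂ * x₂ - p`. -/
def util (v : ℝ × ℝ) (it : (ℝ × ℝ) × ℝ) : ℝ :=
  v.1 * it.1.1 + v.2 * it.1.2 - it.2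

/-- `M` is a menu: every item has allocation in `[0,1]²` and nonnegative price,
and the zero item `((0,0),0)` belongs to `M`. -/
def IsMenu (M : Finset ((ℝ × ℝ) × ℝ)) : Prop :=
  (((0 : ℝ), (0 : ℝ)), (0 : ℝ)) ∈ M ∧
    ∀ it ∈ M, it.1.1 ∈ Set.Icc (0 : ℝ) 1 ∧ it.1.2 ∈ Set.Icc (0 : ℝ) 1 ∧ 0 ≤ it.2

/-- The price paid by a buyer with value `v`: the highest price among the
utility-maximizing menu items of `M`. -/
def buyerPrice (M : Finset ((ℝ × ℝ) × ℝ)) (v : ℝ × ℝ) : ℝ :=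
  sSup {p : ℝ | ∃ it ∈ M, it.2 = p ∧ ∀ it' ∈ M, util v it' ≤ util v it}

/-- Revenue of the menu `M` under the uniform distribution on `[0,1]²`. -/
def rev (M : Finset ((ℝ × ℝ) × ℝ)) : ℝ :=
  ∫ v in Set.Icc ((0 : ℝ), (0 : ℝ)) ((1 : ℝ), (1 : ℝ)), buyerPrice M v

/-- The triangle `T = {(v₁,v₂) : v₁ ≥ 0, v₂ ≥ 0, v₁/c + v₂ ≤ 1}`. -/
def Tri (c : ℝ) : Set (ℝ × ℝ) := {v | 0 ≤ v.1 ∧ 0 ≤ v.2 ∧ v.1 / c + v.2 ≤ 1}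

/-- The uniform probability measure on the triangle `Tri c`, i.e. the measure
with density `2 / c` with respect to Lebesgue measure, restricted to `Tri c`. -/
def triMeasure (c : ℝ) : Measure (ℝ × ℝ) :=
  ENNReal.ofReal (2 / c) • (volume.restrict (Tri c))

/-- Revenue of the menu `M` under the uniform distribution on the triangle `Tri c`. -/
def revTri (c : ℝ) (M : Finset ((ℝ × ℝ) × ℝ)) : ℝ :=
  ∫ v, buyerPrice M v ∂(triMeasure c)

/-!
An incentive compatible mechanism with truthful utility `U` satisfies
`U (r • v) ≥ U v + (r - 1) * (p v + U v)`. Integrating over the triangle `T` and differentiating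
the scaling at `r = 1` bounds `∫_T p` by `c ∫₀¹ U (c (1 - y), y) dy - 3 ∫_T U`, the integral of `U`
over the hypotenuse minus three times its integral over `T`.

Put `t = √(c / 3)`. Since allocations are at most `1`, the function `W = U - v₁ - v₂` is antitone.
Cut the region `{v ∈ T | t ≤ v₁ + v₂}` by the lines `v₁ = G y` and `v₂ = y`, where `G` is chosen so
that the part to the right and below has area `c y / 3`. For `t ≤ 2 / 3` such a `G` exists and is
antitone, so these parts grow with `y`, and the layer added at `y` lies to the left of and below the
point `(c (1 - y), y)` of the hypotenuse. Hence `W` is at least `W (c (1 - y), y)` on the layer, and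
integrating over the layers gives `c ∫₀¹ W (c (1 - y), y) dy ≤ 3 ∫ W` over the region. The corner
`v₁ + v₂ < t`, where `U ≥ 0`, costs three times the integral of `v₁ + v₂` over it, which is `t³`.
-/

open Set Filter Topology
open scoped Pointwise

section IteratedIntegrals

variable {S : Set (ℝ × ℝ)} {F : ℝ × ℝ → ℝ} {a b : ℝ} {f g : ℝ → ℝ}

lemma setIntegral_eq_integral_integral_of_mem_iff (hS : IsCompact S) (hF : ContinuousOn F S)
    (hab : a ≤ b) (hfg : ∀ x ∈ Icc a b, f x ≤ g x)
    (hmem : ∀ x y, (x, y) ∈ S ↔ x ∈ Icc a b ∧ y ∈ Icc (f x) (g x)) :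
    ∫ v in S, F v = ∫ x in a..b, ∫ y in f x..g x, F (x, y) := by
  have hint : Integrable (S.indicator F) (volume.prod volume) :=
    (integrable_indicator_iff hS.measurableSet).2 (hF.integrableOn_compact hS)
  rw [← integral_indicator hS.measurableSet, Measure.volume_eq_prod, integral_prod _ hint,
    intervalIntegral.integral_of_le hab, ← integral_Icc_eq_integral_Ioc,
    ← integral_indicator measurableSet_Icc]
  refine integral_congr_ae (.of_forall fun x => ?_)
  by_cases hx : x ∈ Icc a b
  · have hslice : (fun y => S.indicator F (x, y)) =
        (Icc (f x) (g x)).indicator fun y => F (x, y) := by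
      ext y
      by_cases hy : y ∈ Icc (f x) (g x)
      · rw [indicator_of_mem ((hmem x y).2 ⟨hx, hy⟩), indicator_of_mem hy]
      · rw [indicator_of_notMem fun h => hy ((hmem x y).1 h).2, indicator_of_notMem hy]
    simp only [indicator_of_mem hx, hslice]
    rw [integral_indicator measurableSet_Icc, intervalIntegral.integral_of_le (hfg x hx),
      integral_Icc_eq_integral_Ioc]
  · simp [hmem, hx]

lemma setIntegral_eq_integral_integral_of_mem_iff_symm (hS : IsCompact S) (hF : ContinuousOn F S)
    (hab : a ≤ b) (hfg : ∀ y ∈ Icc a b, f y ≤ g y)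
    (hmem : ∀ x y, (x, y) ∈ S ↔ y ∈ Icc a b ∧ x ∈ Icc (f y) (g y)) :
    ∫ v in S, F v = ∫ y in a..b, ∫ x in f y..g y, F (x, y) := by
  have hswap : ∫ v in S, F v = ∫ v in Prod.swap ⁻¹' S, F v.swap :=
    (Measure.measurePreserving_swap.setIntegral_preimage_emb
      MeasurableEquiv.prodComm.measurableEmbedding F S).symm
  have hcompact : IsCompact (Prod.swap ⁻¹' S) :=
    (Homeomorph.prodComm ℝ ℝ).isCompact_preimage.2 hS
  exact hswap.trans (setIntegral_eq_integral_integral_of_mem_iff hcompact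
    (hF.comp continuous_swap.continuousOn (mapsTo_preimage _ _)) hab hfg fun y x => hmem x y)

end IteratedIntegrals

section ScaledTriangle

variable {c r : ℝ}

lemma mem_smul_Tri (hr : 0 < r) (v : ℝ × ℝ) :
    v ∈ r • Tri c ↔ 0 ≤ v.1 ∧ 0 ≤ v.2 ∧ v.1 / c + v.2 ≤ r := by
  have hsum : r⁻¹ * v.1 / c + r⁻¹ * v.2 = r⁻¹ * (v.1 / c + v.2) := by ring
  simp only [mem_smul_set_iff_inv_smul_mem₀ hr.ne', Tri, mem_ofPred_eq, Prod.smul_fst,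
    Prod.smul_snd, smul_eq_mul, hsum, inv_mul_le_one₀ hr, mul_nonneg_iff_of_pos_left (inv_pos.2 hr)]

lemma mk_mem_smul_Tri_iff_mem_Icc (hc : 0 < c) (hr : 0 < r) (x y : ℝ) :
    (x, y) ∈ r • Tri c ↔ y ∈ Icc 0 r ∧ x ∈ Icc 0 (c * (r - y)) := by
  have hdiv : x / c + y ≤ r ↔ x ≤ c * (r - y) := by
    rw [← le_sub_iff_add_le, div_le_iff₀' hc]
  simp only [mem_smul_Tri hr, hdiv, mem_Icc]
  refine ⟨fun ⟨hx, hy, hxy⟩ => ⟨⟨hy, ?_⟩, hx, hxy⟩, fun ⟨⟨hy, _⟩, hx, hxy⟩ => ⟨hx, hy, hxy⟩⟩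
  exact sub_nonneg.1 (nonneg_of_mul_nonneg_right (hx.trans hxy) hc)

lemma mk_mem_Tri_iff_mem_Icc (hc : 0 < c) (x y : ℝ) :
    (x, y) ∈ Tri c ↔ y ∈ Icc 0 1 ∧ x ∈ Icc 0 (c * (1 - y)) := by
  simpa only [one_smul] using mk_mem_smul_Tri_iff_mem_Icc hc one_pos x y

lemma isCompact_Tri (hc : 0 < c) : IsCompact (Tri c) := by
  have hclosed : IsClosed (Tri c) :=
    (isClosed_le continuous_const continuous_fst).inter
      ((isClosed_le continuous_const continuous_snd).inter
        (isClosed_le ((continuous_fst.div_const c).add continuous_snd) continuous_const))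
  refine (isCompact_Icc (a := ((0 : ℝ), (0 : ℝ))) (b := (c, 1))).of_isClosed_subset hclosed ?_
  rintro ⟨x, y⟩ hv
  obtain ⟨⟨hy, hy1⟩, hx, hxc⟩ := (mk_mem_Tri_iff_mem_Icc hc x y).1 hv
  exact ⟨⟨hx, hy⟩, ⟨hxc.trans (mul_le_of_le_one_right hc.le (by linarith)), hy1⟩⟩

variable {F : ℝ × ℝ → ℝ}

lemma continuous_integral_segment (hF : Continuous F) :
    Continuous fun σ => ∫ y in 0..σ, F (c * (σ - y), y) :=
  intervalIntegral.continuous_parametric_intervalIntegral_of_continuous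
    (f := fun σ y => F (c * (σ - y), y)) (by fun_prop) continuous_id

lemma setIntegral_smul_Tri (hc : 0 < c) (hr : 0 < r) (hF : Continuous F) :
    ∫ v in r • Tri c, F v = ∫ σ in 0..r, c * ∫ y in 0..σ, F (c * (σ - y), y) := by
  have hcompact : IsCompact {w : ℝ × ℝ | 0 ≤ w.2 ∧ w.2 ≤ w.1 ∧ w.1 ≤ r} := by
    refine (isCompact_Icc (a := ((0 : ℝ), (0 : ℝ))) (b := (r, r))).of_isClosed_subset
      ((isClosed_le continuous_const continuous_snd).inter
        ((isClosed_le continuous_snd continuous_fst).inter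
          (isClosed_le continuous_fst continuous_const))) ?_
    rintro w ⟨h0, hle, hr⟩
    exact ⟨⟨h0.trans hle, h0⟩, ⟨hr, hle.trans hr⟩⟩
  have hG : Continuous fun w : ℝ × ℝ => c * F (c * (w.1 - w.2), w.2) := by fun_prop
  have hsubst (y : ℝ) :
      ∫ x in 0..c * (r - y), F (x, y) = ∫ σ in y..r, c * F (c * (σ - y), y) := by
    have := intervalIntegral.mul_integral_comp_mul_sub (a := y) (b := r)
      (f := fun x => F (x, y)) c (c * y)
    simpa only [intervalIntegral.integral_const_mul, mul_sub, sub_self] using this.symm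
  calc ∫ v in r • Tri c, F v
      = ∫ y in 0..r, ∫ x in 0..c * (r - y), F (x, y) :=
        setIntegral_eq_integral_integral_of_mem_iff_symm ((isCompact_Tri hc).smul r)
          hF.continuousOn hr.le (fun y hy => mul_nonneg hc.le (sub_nonneg.2 hy.2))
          (mk_mem_smul_Tri_iff_mem_Icc hc hr)
    _ = ∫ y in 0..r, ∫ σ in y..r, c * F (c * (σ - y), y) := by simp only [hsubst]
    _ = ∫ w in {w : ℝ × ℝ | 0 ≤ w.2 ∧ w.2 ≤ w.1 ∧ w.1 ≤ r}, c * F (c * (w.1 - w.2), w.2) :=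
        (setIntegral_eq_integral_integral_of_mem_iff_symm hcompact hG.continuousOn hr.le
          (fun y hy => hy.2) (by simp only [mem_ofPred_eq, mem_Icc]; grind)).symm
    _ = ∫ σ in 0..r, ∫ y in 0..σ, c * F (c * (σ - y), y) :=
        setIntegral_eq_integral_integral_of_mem_iff hcompact hG.continuousOn hr.le
          (fun σ hσ => hσ.1) (by simp only [mem_ofPred_eq, mem_Icc]; grind)
    _ = ∫ σ in 0..r, c * ∫ y in 0..σ, F (c * (σ - y), y) := by
        simp only [intervalIntegral.integral_const_mul]

lemma hasDerivAt_setIntegral_smul_Tri (hc : 0 < c) (hr : 0 < r) (hF : Continuous F) :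
    HasDerivAt (fun r => ∫ v in r • Tri c, F v) (c * ∫ y in 0..r, F (c * (r - y), y)) r := by
  have hcont : Continuous fun σ => c * ∫ y in 0..σ, F (c * (σ - y), y) :=
    continuous_const.mul (continuous_integral_segment hF)
  refine (hcont.integral_hasStrictDerivAt 0 r).hasDerivAt.congr_of_eventuallyEq ?_
  filter_upwards [lt_mem_nhds hr] with s hs using setIntegral_smul_Tri hc hs hF

lemma integral_segment_fst_add_snd (c σ : ℝ) :
    ∫ y in 0..σ, (c * (σ - y) + y) = (c + 1) * σ ^ 2 / 2 := by
  have hlin (y : ℝ) : c * (σ - y) + y = c * σ + (1 - c) * y := by ring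
  simp only [hlin]
  rw [intervalIntegral.integral_add (by simp)
    ((by fun_prop : Continuous fun y : ℝ => (1 - c) * y).intervalIntegrable _ _),
    intervalIntegral.integral_const, intervalIntegral.integral_const_mul (1 - c), integral_id,
    smul_eq_mul]
  ring

lemma setIntegral_smul_Tri_fst_add_snd (hc : 0 < c) (hr : 0 < r) :
    ∫ v in r • Tri c, (v.1 + v.2) = c * (c + 1) * r ^ 3 / 6 := by
  rw [setIntegral_smul_Tri hc hr (by fun_prop)]
  simp only [integral_segment_fst_add_snd, intervalIntegral.integral_const_mul,
    intervalIntegral.integral_div, integral_pow]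
  ring

end ScaledTriangle

section RadialBound

variable {E : Type*} [NormedAddCommGroup E] [NormedSpace ℝ E] [MeasurableSpace E] [BorelSpace E]
  [FiniteDimensional ℝ E] {μ : Measure E} [μ.IsAddHaarMeasure] {S : Set E} {U p : E → ℝ}

lemma pow_finrank_mul_le_setIntegral_smul (hS : IsCompact S) (hU : Continuous U)
    (hp : IntegrableOn p S μ) {r : ℝ} (hr : 0 < r)
    (hUp : ∀ v ∈ S, U v + (r - 1) * (p v + U v) ≤ U (r • v)) :
    r ^ Module.finrank ℝ E * (r * ∫ v in S, U v ∂μ + (r - 1) * ∫ v in S, p v ∂μ) ≤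
      ∫ v in r • S, U v ∂μ := by
  have hUS : IntegrableOn U S μ := hU.continuousOn.integrableOn_compact hS
  have hUrS : IntegrableOn (fun v => U (r • v)) S μ :=
    (by fun_prop : Continuous fun v => U (r • v)).continuousOn.integrableOn_compact hS
  have hscale : ∫ v in r • S, U v ∂μ = r ^ Module.finrank ℝ E * ∫ v in S, U (r • v) ∂μ := by
    rw [Measure.setIntegral_comp_smul_of_pos μ U S hr, smul_eq_mul,
      mul_inv_cancel_left₀ (pow_ne_zero _ hr.ne')]
  have hlin : r * ∫ v in S, U v ∂μ + (r - 1) * ∫ v in S, p v ∂μ =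
      ∫ v in S, (r * U v + (r - 1) * p v) ∂μ := by
    rw [integral_add (hUS.const_mul r) (hp.const_mul (r - 1)), integral_const_mul,
      integral_const_mul]
  rw [hscale, hlin]
  gcongr ?_ * ?_
  refine setIntegral_mono_on ((hUS.const_mul r).add (hp.const_mul (r - 1))) hUrS
    hS.measurableSet fun v hv => ?_
  linarith [hUp v hv]

lemma setIntegral_le_deriv_sub_of_radial_bound (hS : IsCompact S) (hU : Continuous U)
    (hp : IntegrableOn p S μ) (hUp : ∀ v ∈ S, ∀ r : ℝ, 1 ≤ r →
      U v + (r - 1) * (p v + U v) ≤ U (r • v))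
    {A' : ℝ} (hA' : HasDerivAt (fun r : ℝ => ∫ v in r • S, U v ∂μ) A' 1) :
    ∫ v in S, p v ∂μ ≤ A' - (Module.finrank ℝ E + 1) * ∫ v in S, U v ∂μ := by
  set d := Module.finrank ℝ E
  set I := ∫ v in S, U v ∂μ
  set P := ∫ v in S, p v ∂μ
  set gap : ℝ → ℝ := fun r => (∫ v in r • S, U v ∂μ) - r ^ d * (r * I + (r - 1) * P)
  have hgap_one : gap 1 = 0 := by simp [gap, I]
  have hgap_deriv : HasDerivAt gap (A' - (d + 1) * I - P) 1 := by
    have hpow := (hasDerivAt_pow d (1 : ℝ)).fun_mul (((hasDerivAt_id (1 : ℝ)).mul_const I).fun_add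
      (((hasDerivAt_id (1 : ℝ)).sub_const 1).mul_const P))
    exact (hA'.fun_sub hpow).congr_deriv (by simp; ring)
  have hslope : ∀ᶠ r in 𝓝[>] (1 : ℝ), 0 ≤ slope gap 1 r := by
    filter_upwards [self_mem_nhdsWithin] with r (hr : 1 < r)
    rw [slope_def_field, hgap_one, sub_zero]
    exact div_nonneg (sub_nonneg.2 (pow_finrank_mul_le_setIntegral_smul hS hU hp (one_pos.trans hr)
      fun v hv => hUp v hv r hr.le)) (sub_pos.2 hr).le
  have hslope_tendsto := (hasDerivWithinAt_iff_tendsto_slope' self_notMem_Ioi).1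
    hgap_deriv.hasDerivWithinAt
  linarith [ge_of_tendsto hslope_tendsto hslope]

end RadialBound

section Sweep

variable {α : Type*} [MeasurableSpace α] {μ : Measure α} {a b m M : ℝ} {R : ℝ → Set α}
  {W : α → ℝ} {w : ℝ → ℝ → ℝ}

lemma setIntegral_sub_setIntegral_ge {s s' : Set α} (hs : MeasurableSet s) (hs' : MeasurableSet s')
    (hss' : s ⊆ s') (hfin : μ s' ≠ ⊤) (hW : IntegrableOn W s' μ) {k : ℝ}
    (hk : ∀ v ∈ s' \ s, k ≤ W v) :
    k * (μ.real s' - μ.real s) ≤ ∫ v in s', W v ∂μ - ∫ v in s, W v ∂μ := by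
  rw [← measureReal_sdiff hss' hs, ← setIntegral_sdiff hs hW hss']
  exact setIntegral_ge_of_const_le_real (hs'.diff hs)
    (measure_ne_top_of_subset sdiff_subset hfin) hk (hW.mono_set sdiff_subset)

lemma continuousOn_setIntegral_of_measureReal_eq_mul (hR : ∀ y ∈ Icc a b, MeasurableSet (R y))
    (hmono : MonotoneOn R (Icc a b)) (hfin : μ (R b) ≠ ⊤)
    (harea : ∀ y ∈ Icc a b, μ.real (R y) = m * (y - a))
    (hW : IntegrableOn W (R b) μ) (hWM : ∀ v ∈ R b, ‖W v‖ ≤ M) :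
    ContinuousOn (fun y => ∫ v in R y, W v ∂μ) (Icc a b) := by
  refine (LipschitzOnWith.of_dist_le_mul (K := (M * m).toNNReal) fun y hy z hz => ?_).continuousOn
  wlog hyz : y ≤ z generalizing y z
  · rw [dist_comm, dist_comm y]
    exact this z hz y hy (le_of_not_ge hyz)
  have hzb : R z ⊆ R b := hmono hz (right_mem_Icc.2 (hz.1.trans hz.2)) hz.2
  have hfinz : μ (R z) ≠ ⊤ := measure_ne_top_of_subset hzb hfin
  have hsub : R y ⊆ R z := hmono hy hz hyz
  calc dist (∫ v in R y, W v ∂μ) (∫ v in R z, W v ∂μ)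
      = ‖∫ v in R z \ R y, W v ∂μ‖ := by
        rw [dist_comm, dist_eq_norm, setIntegral_sdiff (hR y hy) (hW.mono_set hzb) hsub]
    _ ≤ M * μ.real (R z \ R y) :=
        norm_setIntegral_le_of_norm_le_const
          (measure_ne_top_of_subset sdiff_subset hfinz).lt_top fun v hv => hWM v (hzb hv.1)
    _ = M * m * dist y z := by
        rw [measureReal_sdiff hsub (hR y hy), harea y hy, harea z hz, dist_comm, Real.dist_eq,
          abs_of_nonneg (sub_nonneg.2 hyz)]
        ring
    _ ≤ (M * m).toNNReal * dist y z := by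
        gcongr
        exact le_coe_toNNReal _

lemma integral_diag_le_sub_of_increment_ge {Ψ : ℝ → ℝ} (hab : a ≤ b)
    (hΨ : ContinuousOn Ψ (Icc a b)) (hw : Continuous (Function.uncurry w))
    (hincr : ∀ y ∈ Icc a b, ∀ z ∈ Icc a b, y < z → w y z * (z - y) ≤ Ψ z - Ψ y) :
    ∫ y in a..b, w y y ≤ Ψ b - Ψ a := by
  have hdiag : Continuous fun y => w y y := hw.comp (continuous_id.prodMk continuous_id)
  have hderiv (y : ℝ) : HasDerivAt (fun y => -(∫ z in a..y, w z z) - Ψ a) (-w y y) y :=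
    (hdiag.integral_hasStrictDerivAt a y).hasDerivAt.fun_neg.sub_const (Ψ a)
  have hslope (y : ℝ) (hy : y ∈ Ico a b) (r : ℝ) (hr : -w y y < r) :
      ∃ᶠ z in 𝓝[>] y, slope (-Ψ) y z < r := by
    have hnear : ∀ᶠ z in 𝓝[>] y, -w y z < r :=
      ((hw.comp (Continuous.prodMk_right y)).neg.tendsto y |>.eventually_lt_const hr)
        |>.filter_mono nhdsWithin_le_nhds
    refine Eventually.frequently ?_
    filter_upwards [hnear, Ioo_mem_nhdsGT hy.2] with z hz hyz
    have hyz' := hincr y (Ico_subset_Icc_self hy) z ⟨hy.1.trans hyz.1.le, hyz.2.le⟩ hyz.1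
    rw [slope_def_field, div_lt_iff₀ (sub_pos.2 hyz.1), Pi.neg_apply, Pi.neg_apply]
    linarith [mul_lt_mul_of_pos_right hz (sub_pos.2 hyz.1)]
  have hle := image_le_of_liminf_slope_right_le_deriv_boundary hΨ.neg (by simp)
    (fun y _ => (hderiv y).continuousAt.continuousWithinAt)
    (fun y _ => (hderiv y).hasDerivWithinAt) hslope (right_mem_Icc.2 hab)
  rw [Pi.neg_apply] at hle
  linarith

lemma mul_integral_le_setIntegral_of_layer_bound (hab : a ≤ b)
    (hR : ∀ y ∈ Icc a b, MeasurableSet (R y)) (hmono : MonotoneOn R (Icc a b))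
    (hfin : μ (R b) ≠ ⊤) (harea : ∀ y ∈ Icc a b, μ.real (R y) = m * (y - a))
    (hW : IntegrableOn W (R b) μ) (hWM : ∀ v ∈ R b, ‖W v‖ ≤ M)
    (hw : Continuous (Function.uncurry w))
    (hlayer : ∀ y ∈ Icc a b, ∀ z ∈ Icc a b, y < z → ∀ v ∈ R z \ R y, w y z ≤ W v) :
    m * ∫ y in a..b, w y y ≤ ∫ v in R b, W v ∂μ := by
  have hsub (y : ℝ) (hy : y ∈ Icc a b) : R y ⊆ R b := hmono hy (right_mem_Icc.2 hab) hy.2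
  have hfin' (y : ℝ) (hy : y ∈ Icc a b) : μ (R y) ≠ ⊤ :=
    measure_ne_top_of_subset (hsub y hy) hfin
  have hstart : ∫ v in R a, W v ∂μ = 0 := by
    have ha : a ∈ Icc a b := left_mem_Icc.2 hab
    have hnull : μ (R a) = 0 := (measureReal_eq_zero_iff (hfin' a ha)).1 (by rw [harea a ha]; ring)
    rw [Measure.restrict_eq_zero.2 hnull, integral_zero_measure]
  have hincr (y : ℝ) (hy : y ∈ Icc a b) (z : ℝ) (hz : z ∈ Icc a b) (hyz : y < z) :
      m * w y z * (z - y) ≤ ∫ v in R z, W v ∂μ - ∫ v in R y, W v ∂μ := by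
    have := setIntegral_sub_setIntegral_ge (hR y hy) (hR z hz) (hmono hy hz hyz.le)
      (hfin' z hz) (hW.mono_set (hsub z hz)) (hlayer y hy z hz hyz)
    rw [harea y hy, harea z hz] at this
    linarith
  rw [← intervalIntegral.integral_const_mul, ← sub_zero (∫ v in R b, W v ∂μ), ← hstart]
  exact integral_diag_le_sub_of_increment_ge (w := fun y z => m * w y z) hab
    (continuousOn_setIntegral_of_measureReal_eq_mul hR hmono hfin harea hW hWM)
    (continuous_const.mul hw) hincr

end Sweep

section CutTriangle

/-- The part of `Tri c` on or above the line `v₁ + v₂ = t`, to the right of the vertical line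
`v₁ = x` and below the horizontal line `v₂ = y`. For suitable `x = G y` these regions grow with `y`
and sweep out `{v ∈ Tri c | t ≤ v₁ + v₂}` at constant speed. -/
def cutTri (c t x y : ℝ) : Set (ℝ × ℝ) := {v | v ∈ Tri c ∧ t ≤ v.1 + v.2 ∧ v.2 ≤ y ∧ x ≤ v.1}

/-- The area of `cutTri c t x y` when its upper left corner `(x, y)` lies in `Tri c` and on or above
the line `v₁ + v₂ = t`: a trapezoid minus the triangle below that line. -/
def cutArea (c t x y : ℝ) : ℝ := y * (c - x) - c * y ^ 2 / 2 - max (t - x) 0 ^ 2 / 2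

variable {c t x x' y y' : ℝ}

lemma isCompact_cutTri (hc : 0 < c) (t x y : ℝ) : IsCompact (cutTri c t x y) :=
  (isCompact_Tri hc).inter_right <|
    (isClosed_le continuous_const (continuous_fst.add continuous_snd)).inter <|
      (isClosed_le continuous_snd continuous_const).inter <|
        isClosed_le continuous_const continuous_fst

lemma cutTri_subset_cutTri (hx : x' ≤ x) (hy : y ≤ y') : cutTri c t x y ⊆ cutTri c t x' y' :=
  fun _ ⟨hv, ht, hvy, hvx⟩ => ⟨hv, ht, hvy.trans hy, hx.trans hvx⟩

lemma mk_mem_cutTri_iff_mem_Icc (hc : 0 < c) (hx : 0 ≤ x) (hy : y ≤ 1) (x₀ y₀ : ℝ) :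
    (x₀, y₀) ∈ cutTri c t x y ↔ y₀ ∈ Icc 0 y ∧ x₀ ∈ Icc (max x (t - y₀)) (c * (1 - y₀)) := by
  simp only [cutTri, mem_ofPred_eq, mk_mem_Tri_iff_mem_Icc hc, mem_Icc, max_le_iff,
    sub_le_iff_le_add]
  grind

lemma fst_le_of_mem_cutTri_diff (hc : 0 < c) (hx : x ≤ c * (1 - y)) {v : ℝ × ℝ}
    (hv : v ∈ cutTri c t x' y' \ cutTri c t x y) : v.1 ≤ c * (1 - y) := by
  obtain ⟨⟨hvT, htv, -⟩, hnot⟩ := hv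
  by_cases hvy : v.2 ≤ y
  · have : v.1 < x := not_le.1 fun hxv => hnot ⟨hvT, htv, hvy, hxv⟩
    exact this.le.trans hx
  · exact ((mk_mem_Tri_iff_mem_Icc hc v.1 v.2).1 hvT).2.2.trans
      (mul_le_mul_of_nonneg_left (by linarith) hc.le)

lemma integral_max_sub_zero {d : ℝ} (hy : 0 ≤ y) (hd : d ≤ y) :
    ∫ z in 0..y, max (d - z) 0 = max d 0 ^ 2 / 2 := by
  have hint (a b : ℝ) : IntervalIntegrable (fun z => max (d - z) 0) volume a b :=
    (by fun_prop : Continuous fun z => max (d - z) 0).intervalIntegrable a b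
  have hpos : ∫ z in 0..max d 0, max (d - z) 0 = ∫ z in 0..max d 0, (max d 0 - z) := by
    refine intervalIntegral.integral_congr fun z hz => ?_
    rw [uIcc_of_le (le_max_right d 0)] at hz
    grind
  have hzero : ∫ z in max d 0..y, max (d - z) 0 = 0 := by
    refine intervalIntegral.integral_zero_ae (.of_forall fun z hz => ?_)
    rw [uIoc_of_le (max_le hd hy)] at hz
    exact max_eq_right (sub_nonpos.2 ((le_max_left d 0).trans hz.1.le))
  rw [← intervalIntegral.integral_add_adjacent_intervals (hint 0 (max d 0)) (hint _ y), hpos,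
    hzero, intervalIntegral.integral_sub (by simp) (by simp), intervalIntegral.integral_const,
    integral_id, smul_eq_mul]
  ring

lemma measureReal_cutTri (hc : 1 ≤ c) (ht : t ≤ 1) (hx : 0 ≤ x) (hy : 0 ≤ y)
    (hxc : x ≤ c * (1 - y)) (htx : t - x ≤ y) :
    volume.real (cutTri c t x y) = cutArea c t x y := by
  have hc0 : 0 < c := one_pos.trans_le hc
  have hy1 : y ≤ 1 := sub_nonneg.1 (nonneg_of_mul_nonneg_right (hx.trans hxc) hc0)
  have hslice (z : ℝ) (hz : z ∈ Icc 0 y) : max x (t - z) ≤ c * (1 - z) := by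
    refine max_le (hxc.trans ?_) ?_
    · exact mul_le_mul_of_nonneg_left (by linarith [hz.2]) hc0.le
    · exact (sub_le_sub_right ht z).trans (le_mul_of_one_le_left (by linarith [hz.2]) hc)
  have hlength (z : ℝ) :
      ∫ _ in max x (t - z)..c * (1 - z), (1 : ℝ) = c - x - c * z - max (t - x - z) 0 := by
    have hmax : max x (t - z) = x + max (t - x - z) 0 := by grind
    rw [intervalIntegral.integral_const, hmax, smul_eq_mul]
    ring
  have hlin : IntervalIntegrable (fun z => c - x - c * z) volume 0 y :=
    (by fun_prop : Continuous fun z => c - x - c * z).intervalIntegrable 0 y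
  have hmax : IntervalIntegrable (fun z => max (t - x - z) 0) volume 0 y :=
    (by fun_prop : Continuous fun z => max (t - x - z) 0).intervalIntegrable 0 y
  calc volume.real (cutTri c t x y)
      = ∫ _ in cutTri c t x y, (1 : ℝ) := by simp
    _ = ∫ z in 0..y, ∫ _ in max x (t - z)..c * (1 - z), (1 : ℝ) :=
        setIntegral_eq_integral_integral_of_mem_iff_symm (isCompact_cutTri hc0 t x y)
          continuousOn_const hy hslice (mk_mem_cutTri_iff_mem_Icc hc0 hx hy1)
    _ = cutArea c t x y := by
        simp only [hlength]
        rw [intervalIntegral.integral_sub hlin hmax, integral_max_sub_zero hy htx,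
          intervalIntegral.integral_sub (by simp)
            ((by fun_prop : Continuous fun z => c * z).intervalIntegrable 0 y),
          intervalIntegral.integral_const, intervalIntegral.integral_const_mul c, integral_id,
          cutArea, smul_eq_mul]
        ring

lemma div_three_mul_le_cutArea (hc : 1 ≤ c) (ht0 : 0 ≤ t) (ht1 : t ≤ 1) (hct : c = 3 * t ^ 2)
    (hy : y ∈ Icc 0 1) : c / 3 * y ≤ cutArea c t (max 0 (t - y)) y := by
  have ht3 : 1 / 3 ≤ t := by nlinarith
  rcases le_total y t with hyt | hty
  · rw [cutArea, max_eq_right (sub_nonneg.2 hyt), sub_sub_cancel, max_eq_left hy.1]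
    have hfactor : 0 ≤ 2 * c / 3 - t - (c - 1) * y / 2 := by
      have hroots : 2 * c / 3 - t - (c - 1) * t / 2 = t * (3 * t - 1) * (1 - t) / 2 := by
        rw [hct]; ring
      have : 0 ≤ t * (3 * t - 1) * (1 - t) / 2 := by
        have : 0 ≤ 3 * t - 1 := by linarith
        have : 0 ≤ 1 - t := sub_nonneg.2 ht1
        positivity
      nlinarith
    nlinarith [mul_nonneg hy.1 hfactor]
  · have hroots : y * c - c * y ^ 2 / 2 - t ^ 2 / 2 - c / 3 * y =
        c / 2 * (1 - y) * (y - 1 / 3) := by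
      rw [hct]; ring
    have : 0 ≤ c / 2 * (1 - y) * (y - 1 / 3) :=
      mul_nonneg (mul_nonneg (by linarith) (sub_nonneg.2 hy.2)) (by linarith)
    rw [cutArea, max_eq_left (sub_nonpos.2 hty), sub_zero, sub_zero, max_eq_left ht0]
    linarith [hroots]

lemma cutArea_le_div_three_mul (hc : 1 ≤ c) (ht0 : 0 ≤ t) (ht : t ≤ 2 / 3) (hct : c = 3 * t ^ 2)
    (hy : y ∈ Icc 0 1) : cutArea c t (c * (1 - y)) y ≤ c / 3 * y := by
  obtain ⟨hy0, hy1⟩ := hy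
  rw [cutArea]
  rcases le_total (t - c * (1 - y)) 0 with hneg | hpos
  · have hy_le : y ≤ 2 / 3 := by nlinarith
    rw [max_eq_right hneg]
    nlinarith [mul_nonneg (mul_nonneg (by linarith : 0 ≤ c) hy0) (sub_nonneg.2 hy_le)]
  · have hroots : (t - c * (1 - y)) ^ 2 - c * y ^ 2 + 2 * (c / 3 * y) =
        (1 - y) * (2 * c * (2 / 3 - t) + (c ^ 2 - c) * (1 - y)) := by
      rw [hct]; ring
    have : 0 ≤ (1 - y) * (2 * c * (2 / 3 - t) + (c ^ 2 - c) * (1 - y)) := by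
      have : 0 ≤ c ^ 2 - c := by nlinarith
      have : 0 ≤ 2 / 3 - t := sub_nonneg.2 ht
      have : 0 ≤ 1 - y := sub_nonneg.2 hy1
      positivity
    rw [max_eq_left hpos]
    linarith [hroots]

lemma exists_cutArea_eq_div_three_mul (hc : 1 ≤ c) (ht0 : 0 ≤ t) (ht : t ≤ 2 / 3)
    (hct : c = 3 * t ^ 2) (hy : y ∈ Icc 0 1) :
    ∃ x ∈ Icc (max 0 (t - y)) (c * (1 - y)), cutArea c t x y = c / 3 * y := by
  have hle : max 0 (t - y) ≤ c * (1 - y) := by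
    refine max_le ?_ ?_ <;> nlinarith [hy.2]
  have hcont : ContinuousOn (fun x => cutArea c t x y) (Icc (max 0 (t - y)) (c * (1 - y))) := by
    unfold cutArea
    fun_prop
  exact intermediate_value_Icc' hle hcont ⟨cutArea_le_div_three_mul hc ht0 ht hct hy,
    div_three_mul_le_cutArea hc ht0 (by linarith) hct hy⟩

lemma le_of_cutArea_eq_div_three_mul (hc : 1 ≤ c) (hy : 0 < y) (hyy' : y < y') (htx : t - x ≤ y)
    (hxy : cutArea c t x y = c / 3 * y) (hxy' : cutArea c t x' y' = c / 3 * y') : x' ≤ x := by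
  by_contra! hxx'
  rw [cutArea] at hxy hxy'
  set p := max (t - x) 0
  set p' := max (t - x') 0
  have hp'0 : 0 ≤ p' := le_max_right _ _
  have hpy : p ≤ y := max_le htx hy.le
  have hp'p : p' ≤ p := max_le_max_right 0 (by linarith)
  have hpp' : p - p' ≤ x' - x := by grind
  have hbalance : p ^ 2 * y' - p' ^ 2 * y = y * y' * (2 * (x' - x) + c * (y' - y)) := by
    linear_combination -2 * y' * hxy + 2 * y * hxy'
  have hsq : p ^ 2 - p' ^ 2 ≤ 2 * y * (x' - x) := by nlinarith
  have hsq' : p' ^ 2 ≤ y ^ 2 := by gcongr; exact hp'p.trans hpy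
  have hcy' : y < c * y' := by nlinarith
  have : p ^ 2 * y' - p' ^ 2 * y < y * y' * (2 * (x' - x) + c * (y' - y)) :=
    calc p ^ 2 * y' - p' ^ 2 * y = (p ^ 2 - p' ^ 2) * y' + p' ^ 2 * (y' - y) := by ring
      _ ≤ 2 * y * (x' - x) * y' + y ^ 2 * (y' - y) := by gcongr; linarith
      _ < 2 * y * (x' - x) * y' + y * (c * y') * (y' - y) := by
        rw [sq]
        gcongr
      _ = y * y' * (2 * (x' - x) + c * (y' - y)) := by ring
  exact this.ne hbalance

lemma exists_antitoneOn_cutArea_eq (hc : 1 ≤ c) (ht0 : 0 ≤ t) (ht : t ≤ 2 / 3)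
    (hct : c = 3 * t ^ 2) :
    ∃ G : ℝ → ℝ, AntitoneOn G (Icc 0 1) ∧
      ∀ y ∈ Icc 0 1, G y ∈ Icc (max 0 (t - y)) (c * (1 - y)) ∧
        cutArea c t (G y) y = c / 3 * y := by
  choose! G₀ hG₀ using fun y (hy : y ∈ Icc (0 : ℝ) 1) =>
    exists_cutArea_eq_div_three_mul hc ht0 ht hct hy
  have htc : t ≤ c := by linarith
  -- At `y = 0` every threshold in `[t, c]` has area `0`; the largest one keeps `G` antitone.
  refine ⟨fun y => if y = 0 then c else G₀ y, fun y hy z hz hyz => ?_, fun y hy => ?_⟩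
  · rcases hyz.eq_or_lt with rfl | hlt
    · rfl
    have hz0 : 0 < z := hy.1.trans_lt hlt
    simp only [hz0.ne', if_false]
    rcases hy.1.eq_or_lt with rfl | hy0
    · simp only [if_true]
      exact (hG₀ z hz).1.2.trans (by nlinarith)
    · simp only [hy0.ne', if_false]
      exact le_of_cutArea_eq_div_three_mul hc hy0 hlt
        (sub_le_comm.1 ((le_max_right _ _).trans (hG₀ y hy).1.1)) (hG₀ y hy).2 (hG₀ z hz).2
  · rcases hy.1.eq_or_lt with rfl | hy0
    · simp [cutArea, htc, ht0.trans htc]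
    · simpa only [hy0.ne', if_false] using hG₀ y hy

end CutTriangle

section Transport

variable {c t : ℝ} {U W : ℝ × ℝ → ℝ}

lemma mul_integral_segment_le_setIntegral_cutTri (hc : 1 ≤ c) (ht0 : 0 ≤ t) (ht : t ≤ 2 / 3)
    (hct : c = 3 * t ^ 2) (hW : Continuous W) (hWanti : Antitone W) :
    c / 3 * ∫ y in 0..1, W (c * (1 - y), y) ≤ ∫ v in cutTri c t 0 1, W v := by
  have hc0 : 0 < c := one_pos.trans_le hc
  obtain ⟨G, hGanti, hG⟩ := exists_antitoneOn_cutArea_eq hc ht0 ht hct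
  have hG_le (y : ℝ) (hy : y ∈ Icc 0 1) : G y ≤ c * (1 - y) := (hG y hy).1.2
  have hG0 (y : ℝ) (hy : y ∈ Icc 0 1) : 0 ≤ G y := (le_max_left _ _).trans (hG y hy).1.1
  have hG1 : G 1 = 0 := le_antisymm (by simpa using hG_le 1 (by simp)) (hG0 1 (by simp))
  have harea (y : ℝ) (hy : y ∈ Icc 0 1) :
      volume.real (cutTri c t (G y) y) = c / 3 * (y - 0) := by
    rw [measureReal_cutTri hc (by linarith) (hG0 y hy) hy.1 (hG_le y hy)
      (sub_le_comm.1 ((le_max_right _ _).trans (hG y hy).1.1)), (hG y hy).2, sub_zero]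
  have hcompact := isCompact_cutTri hc0 t
  obtain ⟨M, hM⟩ := (hcompact (G 1) 1).exists_bound_of_continuousOn hW.continuousOn
  have hsweep := mul_integral_le_setIntegral_of_layer_bound (R := fun y => cutTri c t (G y) y)
    (w := fun y z => W (c * (1 - y), z)) zero_le_one
    (fun y _ => (hcompact _ y).measurableSet)
    (fun y hy z hz hyz => cutTri_subset_cutTri (hGanti hy hz hyz) hyz)
    (hcompact _ 1).measure_lt_top.ne harea (hW.continuousOn.integrableOn_compact (hcompact _ 1)) hM
    (by fun_prop)
    fun y hy z _ _ v hv => hWanti ⟨fst_le_of_mem_cutTri_diff hc0 (hG_le y hy) hv, hv.1.2.2.1⟩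
  rwa [hG1] at hsweep

lemma sub_le_setIntegral_cutTri_fst_add_snd (hc : 0 < c) (ht : 0 < t) :
    c * (c + 1) / 6 - t ^ 3 / 3 ≤ ∫ v in cutTri c t 0 1, (v.1 + v.2) := by
  have hsum : Continuous fun v : ℝ × ℝ => v.1 + v.2 := by fun_prop
  have hTri : IntegrableOn (fun v : ℝ × ℝ => v.1 + v.2) (Tri c) :=
    hsum.continuousOn.integrableOn_compact (isCompact_Tri hc)
  have hcorner : IsCompact (t • Tri 1) := (isCompact_Tri one_pos).smul t
  have hsubset : Tri c \ cutTri c t 0 1 ⊆ t • Tri 1 := by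
    rintro v ⟨hv, hnot⟩
    have hv2 : v.2 ≤ 1 := ((mk_mem_Tri_iff_mem_Icc hc v.1 v.2).1 hv).1.2
    refine (mem_smul_Tri ht v).2 ⟨hv.1, hv.2.1, ?_⟩
    rw [div_one]
    exact (not_le.1 fun htv => hnot ⟨hv, htv, hv2, hv.1⟩).le
  have hle : ∫ v in Tri c \ cutTri c t 0 1, (v.1 + v.2) ≤ ∫ v in t • Tri 1, (v.1 + v.2) := by
    refine setIntegral_mono_set (hsum.continuousOn.integrableOn_compact hcorner) ?_
      hsubset.eventuallyLE
    filter_upwards [ae_restrict_mem hcorner.measurableSet] with v hv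
    have := (mem_smul_Tri ht v).1 hv
    exact add_nonneg this.1 this.2.1
  have htotal : ∫ v in Tri c, (v.1 + v.2) = c * (c + 1) / 6 := by
    simpa using setIntegral_smul_Tri_fst_add_snd hc one_pos
  rw [setIntegral_sdiff (isCompact_cutTri hc t 0 1).measurableSet hTri fun _ hv => hv.1, htotal,
    setIntegral_smul_Tri_fst_add_snd one_pos ht] at hle
  linarith

lemma mul_integral_segment_sub_le_pow_three (hc : 1 ≤ c) (ht0 : 0 < t) (ht : t ≤ 2 / 3)
    (hct : c = 3 * t ^ 2) (hU : Continuous U) (hU0 : ∀ v ∈ Tri c, 0 ≤ U v)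
    (hUanti : Antitone fun v => U v - (v.1 + v.2)) :
    c * (∫ y in 0..1, U (c * (1 - y), y)) - 3 * ∫ v in Tri c, U v ≤ t ^ 3 := by
  have hc0 : 0 < c := one_pos.trans_le hc
  have hintegrable {F : ℝ × ℝ → ℝ} (hF : Continuous F) : IntegrableOn F (cutTri c t 0 1) :=
    hF.continuousOn.integrableOn_compact (isCompact_cutTri hc0 t 0 1)
  have hsegment : ∫ y in 0..1, (U (c * (1 - y), y) - (c * (1 - y) + y)) =
      (∫ y in 0..1, U (c * (1 - y), y)) - (c + 1) / 2 := by
    rw [intervalIntegral.integral_sub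
      ((by fun_prop : Continuous fun y => U (c * (1 - y), y)).intervalIntegrable 0 1)
      ((by fun_prop : Continuous fun y => c * (1 - y) + y).intervalIntegrable 0 1),
      integral_segment_fst_add_snd]
    ring
  have htransport := mul_integral_segment_le_setIntegral_cutTri hc ht0.le ht hct
    (by fun_prop) hUanti
  rw [integral_sub (hintegrable hU) (hintegrable (by fun_prop)), hsegment] at htransport
  have hmono : ∫ v in cutTri c t 0 1, U v ≤ ∫ v in Tri c, U v :=
    setIntegral_mono_set (hU.continuousOn.integrableOn_compact (isCompact_Tri hc0))
      ((ae_restrict_mem (isCompact_Tri hc0).measurableSet).mono hU0)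
      (.of_forall fun _ hv => hv.1)
  linarith [sub_le_setIntegral_cutTri_fst_add_snd hc0 ht0]

end Transport

section IndirectUtility

/-- The direct mechanism `m`, given as the menu item `m v` awarded to each report `v`, awards every
report in `S` an allocation in `[0,1]²`. -/
def UnitAllocationOn (S : Set (ℝ × ℝ)) (m : ℝ × ℝ → (ℝ × ℝ) × ℝ) : Prop :=
  ∀ v ∈ S, (m v).1.1 ∈ Icc (0 : ℝ) 1 ∧ (m v).1.2 ∈ Icc (0 : ℝ) 1

/-- Truthful reporting is optimal for every buyer type in `S` among the reports in `S`. -/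
def IncentiveCompatibleOn (S : Set (ℝ × ℝ)) (m : ℝ × ℝ → (ℝ × ℝ) × ℝ) : Prop :=
  ∀ v ∈ S, ∀ w ∈ S, util v (m w) ≤ util v (m v)

/-- The best utility available to a buyer with value `v` who may report any type in `S` to the
direct mechanism `m`. On `S` it is the truthful utility, and it extends that utility to all of
`ℝ × ℝ`, so that it can be evaluated at `r • v` for `r > 1`. -/
def indirectUtility (S : Set (ℝ × ℝ)) (m : ℝ × ℝ → (ℝ × ℝ) × ℝ) (v : ℝ × ℝ) : ℝ :=
  ⨆ w : S, util v (m w)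

variable {S : Set (ℝ × ℝ)} {m : ℝ × ℝ → (ℝ × ℝ) × ℝ} {v : ℝ × ℝ}

lemma util_le_util_add {it : (ℝ × ℝ) × ℝ} (h₁ : it.1.1 ∈ Icc 0 1) (h₂ : it.1.2 ∈ Icc 0 1)
    (v w : ℝ × ℝ) : util v it ≤ util w it + (max (v.1 - w.1) 0 + max (v.2 - w.2) 0) := by
  have hmul {d q : ℝ} (hq : q ∈ Icc 0 1) : d * q ≤ max d 0 :=
    (mul_le_mul_of_nonneg_right (le_max_left d 0) hq.1).trans
      (mul_le_of_le_one_right (le_max_right d 0) hq.2)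
  unfold util
  linarith [hmul (d := v.1 - w.1) h₁, hmul (d := v.2 - w.2) h₂]

lemma bddAbove_range_util (hS : S.Nonempty) (hm : UnitAllocationOn S m)
    (hIC : IncentiveCompatibleOn S m) (v : ℝ × ℝ) :
    BddAbove (range fun w : S => util v (m w)) := by
  obtain ⟨v₀, hv₀⟩ := hS
  refine ⟨util v₀ (m v₀) + (max (v.1 - v₀.1) 0 + max (v.2 - v₀.2) 0),
    forall_mem_range.2 fun w => ?_⟩
  exact (util_le_util_add (hm w w.2).1 (hm w w.2).2 v v₀).trans
    (add_le_add_left (hIC v₀ hv₀ w w.2) _)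

lemma indirectUtility_eq_util (hIC : IncentiveCompatibleOn S m) (hv : v ∈ S) :
    indirectUtility S m v = util v (m v) := by
  have : Nonempty S := ⟨⟨v, hv⟩⟩
  have hle (w : S) : util v (m w) ≤ util v (m v) := hIC v hv w w.2
  exact le_antisymm (ciSup_le hle) (le_ciSup ⟨_, forall_mem_range.2 hle⟩ (⟨v, hv⟩ : S))

lemma indirectUtility_le_add (hS : S.Nonempty) (hm : UnitAllocationOn S m)
    (hIC : IncentiveCompatibleOn S m) (v w : ℝ × ℝ) :
    indirectUtility S m v ≤
      indirectUtility S m w + (max (v.1 - w.1) 0 + max (v.2 - w.2) 0) := by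
  have : Nonempty S := hS.to_subtype
  exact ciSup_le fun u => (util_le_util_add (hm u u.2).1 (hm u u.2).2 v w).trans
    (add_le_add_left (le_ciSup (bddAbove_range_util hS hm hIC w) u) _)

lemma continuous_indirectUtility (hS : S.Nonempty) (hm : UnitAllocationOn S m)
    (hIC : IncentiveCompatibleOn S m) : Continuous (indirectUtility S m) := by
  refine (LipschitzWith.of_le_add_mul 2 fun v w => ?_).continuous
  have h₁ : max (v.1 - w.1) 0 ≤ dist v w :=
    max_le ((le_abs_self _).trans (le_max_left _ _)) dist_nonneg
  have h₂ : max (v.2 - w.2) 0 ≤ dist v w :=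
    max_le ((le_abs_self _).trans (le_max_right _ _)) dist_nonneg
  rw [NNReal.coe_ofNat]
  linarith [indirectUtility_le_add hS hm hIC v w]

lemma antitone_indirectUtility_sub (hS : S.Nonempty) (hm : UnitAllocationOn S m)
    (hIC : IncentiveCompatibleOn S m) :
    Antitone fun v => indirectUtility S m v - (v.1 + v.2) := by
  intro v w hvw
  have hle := indirectUtility_le_add hS hm hIC w v
  rw [max_eq_left (sub_nonneg.2 hvw.1), max_eq_left (sub_nonneg.2 hvw.2)] at hle
  linarith

lemma indirectUtility_add_mul_le_smul (hm : UnitAllocationOn S m)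
    (hIC : IncentiveCompatibleOn S m) (hv : v ∈ S) (r : ℝ) :
    indirectUtility S m v + (r - 1) * ((m v).2 + indirectUtility S m v) ≤
      indirectUtility S m (r • v) := by
  calc indirectUtility S m v + (r - 1) * ((m v).2 + indirectUtility S m v)
      = util (r • v) (m v) := by
        rw [indirectUtility_eq_util hIC hv]
        simp only [util, Prod.smul_fst, Prod.smul_snd, smul_eq_mul]
        ring
    _ ≤ indirectUtility S m (r • v) := le_ciSup (bddAbove_range_util ⟨v, hv⟩ hm hIC _) (⟨v, hv⟩ : S)

end IndirectUtility

section Revenue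

variable {c t : ℝ} {m : ℝ × ℝ → (ℝ × ℝ) × ℝ}

lemma setIntegral_price_le_pow_three (hc : 1 ≤ c) (ht0 : 0 < t) (ht : t ≤ 2 / 3)
    (hct : c = 3 * t ^ 2) (hm : UnitAllocationOn (Tri c) m)
    (hIC : IncentiveCompatibleOn (Tri c) m)
    (hIR : ∀ v ∈ Tri c, 0 ≤ util v (m v)) :
    ∫ v in Tri c, (m v).2 ≤ t ^ 3 := by
  by_cases hp : IntegrableOn (fun v => (m v).2) (Tri c)
  swap
  · rw [integral_undef hp]
    positivity
  have hc0 : 0 < c := one_pos.trans_le hc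
  have hne : (Tri c).Nonempty := ⟨(0, 0), by simp [Tri]⟩
  set U := indirectUtility (Tri c) m
  have hU : Continuous U := continuous_indirectUtility hne hm hIC
  calc ∫ v in Tri c, (m v).2
      ≤ c * (∫ y in 0..1, U (c * (1 - y), y)) -
          (Module.finrank ℝ (ℝ × ℝ) + 1) * ∫ v in Tri c, U v :=
        setIntegral_le_deriv_sub_of_radial_bound (isCompact_Tri hc0) hU hp
          (fun v hv r _ => indirectUtility_add_mul_le_smul hm hIC hv r)
          (hasDerivAt_setIntegral_smul_Tri hc0 one_pos hU)
    _ = c * (∫ y in 0..1, U (c * (1 - y), y)) - 3 * ∫ v in Tri c, U v := by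
        norm_num [Module.finrank_prod]
    _ ≤ t ^ 3 := mul_integral_segment_sub_le_pow_three hc ht0 ht hct hU
        (fun v hv => (hIR v hv).trans_eq (indirectUtility_eq_util hIC hv).symm)
        (antitone_indirectUtility_sub hne hm hIC)

end Revenue

/-- for `1 ≤ c ≤ 4/3`, every IC and IR direct mechanism on the
triangle `Tri c` with the uniform distribution has revenue at most
`(2/3) * √(c/3)`. -/
theorem triangle_revenue_le_small_c (c : ℝ) (hc1 : 1 ≤ c) (hc2 : c ≤ 4 / 3)
    (x : ℝ × ℝ → ℝ × ℝ) (p : ℝ × ℝ → ℝ)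
    (hx : ∀ v ∈ Tri c, (x v).1 ∈ Set.Icc (0 : ℝ) 1 ∧ (x v).2 ∈ Set.Icc (0 : ℝ) 1)
    (hIC : ∀ v ∈ Tri c, ∀ v' ∈ Tri c,
      v.1 * (x v').1 + v.2 * (x v').2 - p v' ≤ v.1 * (x v).1 + v.2 * (x v).2 - p v)
    (hIR : ∀ v ∈ Tri c, 0 ≤ v.1 * (x v).1 + v.2 * (x v).2 - p v) :
    ∫ v, p v ∂(triMeasure c) ≤ (2 / 3) * Real.sqrt (c / 3) := by
  set t := Real.sqrt (c / 3)
  have ht0 : 0 < t := Real.sqrt_pos.2 (by linarith)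
  have ht : t ≤ 2 / 3 := Real.sqrt_le_iff.2 ⟨by norm_num, by linarith⟩
  have hct : c = 3 * t ^ 2 := by rw [Real.sq_sqrt (by linarith)]; ring
  have hbound : ∫ v in Tri c, p v ≤ t ^ 3 :=
    setIntegral_price_le_pow_three (m := fun v => (x v, p v)) hc1 ht0 ht hct hx hIC hIR
  calc ∫ v, p v ∂(triMeasure c)
      = 2 / c * ∫ v in Tri c, p v := by
        rw [triMeasure, integral_smul_measure, ENNReal.toReal_ofReal (by positivity), smul_eq_mul]
    _ ≤ 2 / c * t ^ 3 := by gcongr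
    _ = 2 / 3 * t := by rw [hct]; field_simp
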